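/- Let q be a real number with 0 < q and q ≠ 1, let h₁, h₂, l₁, α₁, λ be real numbers and t₁, t₂ nonzero reals. Assume λ + α₁ = -N for some positive integer N (so (q^{λ+α₁};q)_n = 0 for all n > N and the series below is a finite sum). Then the function g(x) = x^{-α₁} · Σ_{n=0}^{N} (q^{-λ-α₁+h₁+1/2}·t₁/x)^n · (q^{λ+α₁};q)_n · Σ_{ℓ=0}^{n} [(q^{λ+α₁-h₁+l₁};q)_ℓ / ((q;q)_{n-ℓ}(q;q)_ℓ)] · q^{-ℓ(2n-ℓ-1)/2} · (-q^{-λ-α₁-l₁+h₂}·t₂/t₁)^ℓ satisfies the variant of the confluent q-hypergeometric equation of type (1,2) for all x > 0. -/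

import Mathlib

/-- The finite q-shifted factorial `(a;q)_n = ∏_{i=0}^{n-1} (1 - a q^i)`. -/
noncomputable def qPoch (q a : ℝ) (n : ℕ) : ℝ :=
  ∏ i ∈ Finset.range n, (1 - a * q ^ i)

/-- The variant of the confluent q-hypergeometric equation of type (1,2) (for `x > 0`). -/
def confEq12 (q h₁ h₂ l₁ α₁ lam t₁ t₂ : ℝ) (g : ℝ → ℝ) : Prop :=
  ∀ x : ℝ, 0 < x →
    q ^ (h₁ + h₂ - l₁ - 2 * lam + 1/2) * t₂ * (q ^ (l₁ - 1/2) * t₁ - x) * g (q * x)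
    + (x - q ^ (h₁ + 1/2) * t₁) * (x - q ^ (h₂ + 1/2) * t₂) * g (x / q)
    - (q ^ α₁ * x ^ 2
        - q ^ (h₁ + h₂ - lam + 1/2) * (q ^ (-h₂) * t₁ + q ^ (-h₁) * t₂ + q ^ (-l₁) * t₂) * x
        + q ^ (h₁ + h₂ - lam) * (q + 1) * t₁ * t₂) * g x = 0

/-!
Put `a = q^(λ+α₁)`, `b = q^(λ+α₁-h₁+l₁)`, `d = -q^(-λ-α₁-l₁+h₂) t₂/t₁` and
`y = q^(-λ-α₁+h₁+1/2) t₁/x`, so that `g(x) = x^(-α₁) f(y)` with `f` a polynomial in `y`. Dilating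
`x` by `q` dilates `y` by `1/q`, and the equation for `g` becomes a second order `q`-difference
equation for `f` whose coefficients involve only `q`, `a`, `b`, `d`.

Since `-l(2n-l-1)/2 = (n-l choose 2) - (n choose 2)`, the inner sum is `q^(-(n choose 2))` times the
`n`-th coefficient of `₁φ₀(b; –; q, dX) E_q(X)`. Each of the two factors satisfies a first order
`q`-difference equation, hence so does the product, and reading off coefficients gives a three-term
recurrence for the inner sums. Substituting `f` into its equation, this recurrence cancels every
coefficient except those of the two top powers of `y`, which vanish because `a q^N = 1`.
-/

open PowerSeries

section QPochhammer

lemma qPoch_zero (q a : ℝ) : qPoch q a 0 = 1 := Finset.prod_range_zero _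

lemma qPoch_succ (q a : ℝ) (n : ℕ) : qPoch q a (n + 1) = qPoch q a n * (1 - a * q ^ n) :=
  Finset.prod_range_succ _ n

lemma qPoch_self_succ (q : ℝ) (n : ℕ) : qPoch q q (n + 1) = qPoch q q n * (1 - q ^ (n + 1)) := by
  rw [qPoch_succ, pow_succ']

lemma qPoch_eq_zero {q a : ℝ} {N n : ℕ} (ha : a * q ^ N = 1) (hn : N < n) : qPoch q a n = 0 :=
  Finset.prod_eq_zero (Finset.mem_range.2 hn) (by rw [ha, sub_self])

lemma one_sub_pow_ne_zero {q : ℝ} (hq : |q| ≠ 1) {n : ℕ} (hn : n ≠ 0) : 1 - q ^ n ≠ 0 :=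
  fun h => hq <| (abs_pow_eq_one q hn).1 <| by rw [← sub_eq_zero.1 h, abs_one]

lemma qPoch_self_ne_zero {q : ℝ} (hq : |q| ≠ 1) (n : ℕ) : qPoch q q n ≠ 0 :=
  Finset.prod_ne_zero_iff.2 fun i _ => by
    rw [← pow_succ']
    exact one_sub_pow_ne_zero hq i.succ_ne_zero

end QPochhammer

section GeneratingSeries

lemma rescale_C {R : Type*} [CommSemiring R] (a r : R) : rescale a (C r) = C r := by
  ext (_ | n) <;> simp [coeff_rescale, coeff_C]

/-- Euler's `q`-exponential `E_q(X) = ∑ q^(n choose 2) Xⁿ / (q;q)_n`. -/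
noncomputable def qExpSeries (q : ℝ) : ℝ⟦X⟧ := mk fun n => q ^ n.choose 2 / qPoch q q n

/-- The series `₁φ₀(b; –; q, X) = ∑ (b;q)_n Xⁿ / (q;q)_n` of the `q`-binomial theorem. -/
noncomputable def qBinomialSeries (q b : ℝ) : ℝ⟦X⟧ := mk fun n => qPoch q b n / qPoch q q n

/-- The product `₁φ₀(b; –; q, dX) E_q(X)`. The inner sums of the solution are its coefficients, up
to the factors `q^(n choose 2)`. -/
noncomputable def confGenSeries (q b d : ℝ) : ℝ⟦X⟧ :=
  rescale d (qBinomialSeries q b) * qExpSeries q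

variable {q : ℝ}

lemma one_add_X_mul_rescale_qExpSeries (hq : |q| ≠ 1) :
    (1 + X) * rescale q (qExpSeries q) = qExpSeries q := by
  ext (_ | n)
  · simp only [add_mul, one_mul, map_add, coeff_zero_X_mul, coeff_rescale, pow_zero, add_zero]
  · have hn := qPoch_self_ne_zero hq n
    have hn' := one_sub_pow_ne_zero hq n.succ_ne_zero
    have ratio : (1 - q ^ (n + 1)) * coeff (n + 1) (qExpSeries q)
        = q ^ n * coeff n (qExpSeries q) := by
      simp only [qExpSeries, coeff_mk, qPoch_self_succ, Nat.choose_succ_succ' n 1,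
        Nat.choose_one_right, pow_add q n (n.choose 2)]
      field_simp
    simp only [add_mul, one_mul, map_add, coeff_succ_X_mul, coeff_rescale]
    linear_combination -ratio

lemma one_sub_mul_X_mul_rescale_qBinomialSeries (hq : |q| ≠ 1) (b : ℝ) :
    (1 - C b * X) * rescale q (qBinomialSeries q b) = (1 - X) * qBinomialSeries q b := by
  ext (_ | n)
  · simp only [sub_mul, one_mul, mul_assoc, map_sub, coeff_C_mul, coeff_zero_X_mul, mul_zero,
      coeff_rescale, pow_zero]
  · have hn := qPoch_self_ne_zero hq n
    have hn' := one_sub_pow_ne_zero hq n.succ_ne_zero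
    have ratio : (1 - q ^ (n + 1)) * coeff (n + 1) (qBinomialSeries q b)
        = (1 - b * q ^ n) * coeff n (qBinomialSeries q b) := by
      simp only [qBinomialSeries, coeff_mk, qPoch_self_succ, qPoch_succ q b]
      field_simp
    simp only [sub_mul, one_mul, mul_assoc, map_sub, coeff_C_mul, coeff_succ_X_mul, coeff_rescale]
    linear_combination -ratio

theorem confGenSeries_functional_equation (hq : |q| ≠ 1) (b d : ℝ) :
    (1 + X) * (1 - C (b * d) * X) * rescale q (confGenSeries q b d)
      = (1 - C d * X) * confGenSeries q b d := by
  have hE := one_add_X_mul_rescale_qExpSeries hq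
  have hB := congrArg (rescale d) (one_sub_mul_X_mul_rescale_qBinomialSeries hq b)
  simp only [map_mul, map_sub, map_one, rescale_X, rescale_C, rescale_rescale] at hB
  rw [confGenSeries, map_mul, map_mul, rescale_rescale, mul_comm d q]
  linear_combination (1 - C b * C d * X) * rescale (q * d) (qBinomialSeries q b) * hE
    + qExpSeries q * hB

lemma coeff_zero_confGenSeries (q b d : ℝ) : coeff 0 (confGenSeries q b d) = 1 := by
  simp [confGenSeries, qBinomialSeries, qExpSeries, coeff_mul, coeff_rescale, qPoch_zero,
    -coeff_zero_eq_constantCoeff]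

lemma coeff_one_confGenSeries (hq : |q| ≠ 1) (b d : ℝ) :
    (1 - q) * coeff 1 (confGenSeries q b d) = 1 - b * d + d := by
  have h := congrArg (coeff (0 + 1)) (confGenSeries_functional_equation hq b d)
  simp only [add_mul, sub_mul, one_mul, mul_assoc, map_sub, map_add, coeff_C_mul,
    coeff_succ_X_mul, coeff_zero_X_mul, coeff_rescale, coeff_zero_confGenSeries] at h
  linear_combination -h

lemma coeff_add_two_confGenSeries (hq : |q| ≠ 1) (b d : ℝ) (n : ℕ) :
    (1 - q ^ (n + 2)) * coeff (n + 2) (confGenSeries q b d)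
      = ((1 - b * d) * q ^ (n + 1) + d) * coeff (n + 1) (confGenSeries q b d)
        - b * d * q ^ n * coeff n (confGenSeries q b d) := by
  have h := congrArg (coeff (n + 2)) (confGenSeries_functional_equation hq b d)
  simp only [add_mul, sub_mul, one_mul, mul_assoc, map_sub, map_add, coeff_C_mul,
    coeff_succ_X_mul, coeff_rescale] at h
  linear_combination -h

lemma rpow_neg_mul_div_two_eq_pow_choose_div (hq : 0 < q) {n l : ℕ} (hl : l ≤ n) :
    q ^ (-(l : ℝ) * (2 * (n : ℝ) - (l : ℝ) - 1) / 2) = q ^ (n - l).choose 2 / q ^ n.choose 2 := by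
  rw [← Real.rpow_natCast, ← Real.rpow_natCast, ← Real.rpow_sub hq, Nat.cast_choose_two,
    Nat.cast_choose_two, Nat.cast_sub hl]
  ring_nf

lemma coeff_confGenSeries_div (hq : 0 < q) (b d : ℝ) (n : ℕ) :
    coeff n (confGenSeries q b d) / q ^ n.choose 2 = ∑ l ∈ Finset.range (n + 1),
      qPoch q b l / (qPoch q q (n - l) * qPoch q q l) *
        q ^ (-(l : ℝ) * (2 * (n : ℝ) - (l : ℝ) - 1) / 2) * d ^ l := by
  rw [confGenSeries, coeff_mul, Finset.Nat.sum_antidiagonal_eq_sum_range_succ_mk, Finset.sum_div]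
  refine Finset.sum_congr rfl fun l hl => ?_
  rw [rpow_neg_mul_div_two_eq_pow_choose_div hq (Finset.mem_range_succ_iff.1 hl), coeff_rescale,
    qBinomialSeries, qExpSeries, coeff_mk, coeff_mk]
  ring

/-- The coefficient of `yⁿ` in the solution `f(y)` of the normalized equation: `(a;q)_n` times the
inner sum, the latter encoded through `confGenSeries`. -/
noncomputable def confCoeff (q a b d : ℝ) (n : ℕ) : ℝ :=
  qPoch q a n * (coeff n (confGenSeries q b d) / q ^ n.choose 2)

lemma confCoeff_zero (q a b d : ℝ) : confCoeff q a b d 0 = 1 := by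
  rw [confCoeff, coeff_zero_confGenSeries, qPoch_zero, Nat.choose_zero_succ, pow_zero, div_one,
    mul_one]

lemma confCoeff_one (hq : |q| ≠ 1) (a b d : ℝ) :
    (1 - q) * confCoeff q a b d 1 = (1 - b * d + d) * (1 - a) * confCoeff q a b d 0 := by
  have qPoch_one : qPoch q a 1 = 1 - a := by rw [qPoch_succ, qPoch_zero, one_mul, pow_zero, mul_one]
  rw [confCoeff_zero, confCoeff, qPoch_one, Nat.choose_eq_zero_of_lt one_lt_two, pow_zero, div_one]
  linear_combination (1 - a) * coeff_one_confGenSeries hq b d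

lemma confCoeff_add_two (hq₀ : q ≠ 0) (hq : |q| ≠ 1) (a b d : ℝ) (n : ℕ) :
    (1 - q ^ (n + 2)) * confCoeff q a b d (n + 2)
      = (1 - b * d + d / q ^ (n + 1)) * (1 - a * q ^ (n + 1)) * confCoeff q a b d (n + 1)
        - b * d / q ^ (n + 1) * (1 - a * q ^ n) * (1 - a * q ^ (n + 1)) * confCoeff q a b d n := by
  have h := coeff_add_two_confGenSeries hq b d n
  have pow_choose_succ : q ^ (n + 1).choose 2 = q ^ n * q ^ n.choose 2 := by
    rw [← pow_add, Nat.choose_succ_succ' n 1, Nat.choose_one_right]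
  have pow_choose_add_two : q ^ (n + 2).choose 2 = q ^ (n + 1) * (q ^ n * q ^ n.choose 2) := by
    rw [← pow_choose_succ, ← pow_add, Nat.choose_succ_succ' (n + 1) 1, Nat.choose_one_right]
  simp only [confCoeff, qPoch_succ, pow_choose_succ, pow_choose_add_two]
  field_simp
  linear_combination qPoch q a n * (1 - a * q ^ n) * (1 - a * q ^ (n + 1)) * h

end GeneratingSeries

section NormalForm

/-- The equation satisfied by `f` when `x^(-α₁) f(y)`, with `y` a suitable multiple of `1/x`, solves
`confEq12`. Its parameters are `a = q^(λ+α₁)`, `b = q^(λ+α₁-h₁+l₁)` and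
`d = -q^(-λ-α₁-l₁+h₂) t₂/t₁`. -/
def NormalizedConfEq12 (q a b d : ℝ) (f : ℝ → ℝ) : Prop :=
  ∀ y : ℝ, (1 - a * y) * (1 + a * b * d * y) * f (q * y) + d * y * (1 - b * y / q) * f (y / q)
    = (1 - (1 - b * d - a * d) * y - a * b * d * (1 + q) / q * y ^ 2) * f y

/-- The solution `f(y)` of the normalized equation, truncated after the term `y^N`; it is the whole
series when `a q^N = 1`. -/
noncomputable def confPoly (q a b d : ℝ) (N : ℕ) (y : ℝ) : ℝ :=
  ∑ n ∈ Finset.range (N + 1), y ^ n * confCoeff q a b d n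

lemma sum_pow_mul_eq_of_threeTerm_recurrence {R : Type*} [CommRing R] {u v w : ℕ → R}
    (zero : u 0 = 0) (one : u 1 + v 0 = 0) (add_two : ∀ n, u (n + 2) + v (n + 1) + w n = 0)
    (y : R) (M : ℕ) :
    ∑ n ∈ Finset.range M, y ^ n * (u n + v n * y + w n * y ^ 2)
      = -(y ^ M * u M + y ^ (M + 1) * (u (M + 1) + v M)) := by
  induction M with
  | zero => simp [zero, one]
  | succ M ih =>
    rw [Finset.sum_range_succ, ih]
    linear_combination y ^ (M + 2) * add_two M

theorem normalizedConfEq12_confPoly {q a : ℝ} {N : ℕ} (hq₀ : q ≠ 0) (hq : |q| ≠ 1)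
    (ha : a * q ^ N = 1) (b d : ℝ) : NormalizedConfEq12 q a b d (confPoly q a b d N) := by
  intro y
  have vanish {n : ℕ} (hn : N < n) : confCoeff q a b d n = 0 := by
    rw [confCoeff, qPoch_eq_zero ha hn, zero_mul]
  have telescope := sum_pow_mul_eq_of_threeTerm_recurrence
    (u := fun n => (q ^ n - 1) * confCoeff q a b d n)
    (v := fun n => (1 - b * d + d / q ^ n) * (1 - a * q ^ n) * confCoeff q a b d n)
    (w := fun n => -(b * d / q ^ (n + 1) * (1 - a * q ^ n) * (1 - a * q ^ (n + 1))
      * confCoeff q a b d n))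
    (by rw [pow_zero, sub_self, zero_mul])
    (by
      simp only [pow_zero, pow_one, div_one, mul_one]
      linear_combination -confCoeff_one hq a b d)
    (fun n => by linear_combination -confCoeff_add_two hq₀ hq a b d n) y (N + 1)
  simp only [vanish N.lt_add_one, vanish (N.lt_add_one.trans (N + 1).lt_add_one), mul_zero,
    add_zero, neg_zero] at telescope
  rw [← sub_eq_zero, ← telescope]
  simp only [confPoly, mul_pow, div_pow, Finset.mul_sum, ← Finset.sum_add_distrib,
    ← Finset.sum_sub_distrib]
  refine Finset.sum_congr rfl fun n _ => ?_
  field_simp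
  ring

lemma confPoly_eq_sum {q : ℝ} (hq : 0 < q) (a b d : ℝ) (N : ℕ) (y : ℝ) :
    confPoly q a b d N y = ∑ n ∈ Finset.range (N + 1), y ^ n * qPoch q a n *
      ∑ l ∈ Finset.range (n + 1), qPoch q b l / (qPoch q q (n - l) * qPoch q q l) *
        q ^ (-(l : ℝ) * (2 * (n : ℝ) - (l : ℝ) - 1) / 2) * d ^ l := by
  simp only [confPoly, confCoeff, coeff_confGenSeries_div hq, mul_assoc]

end NormalForm

lemma rpow_mul_comp_div_mul {q x : ℝ} (hq : 0 ≤ q) (hx : 0 ≤ x) (s κ : ℝ) (f : ℝ → ℝ) :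
    (q * x) ^ s * f (κ / (q * x)) = q ^ s * (x ^ s * f (κ / x / q)) := by
  rw [Real.mul_rpow hq hx, mul_comm q x, div_div, mul_assoc]

lemma rpow_mul_comp_div_div {q x : ℝ} (hq : 0 ≤ q) (hx : 0 ≤ x) (s κ : ℝ) (f : ℝ → ℝ) :
    (x / q) ^ s * f (κ / (x / q)) = q ^ (-s) * (x ^ s * f (q * (κ / x))) := by
  rw [Real.div_rpow hx hq, Real.rpow_neg hq, ← div_mul, mul_comm _ q, div_eq_mul_inv]
  ring

lemma confEq12_of_normalizedConfEq12 {q h₁ h₂ l₁ α₁ lam t₁ t₂ : ℝ} (hq : 0 < q) (ht₁ : t₁ ≠ 0)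
    {f : ℝ → ℝ}
    (hf : NormalizedConfEq12 q (q ^ (lam + α₁)) (q ^ (lam + α₁ - h₁ + l₁))
      (-(q ^ (-lam - α₁ - l₁ + h₂) * t₂ / t₁)) f) :
    confEq12 q h₁ h₂ l₁ α₁ lam t₁ t₂
      (fun x => x ^ (-α₁) * f (q ^ (-lam - α₁ + h₁ + 1/2) * t₁ / x)) := by
  intro x hx
  beta_reduce
  rw [rpow_mul_comp_div_mul hq.le hx.le, rpow_mul_comp_div_div hq.le hx.le, neg_neg]
  set a := q ^ (lam + α₁) with ha
  set b := q ^ (lam + α₁ - h₁ + l₁) with hb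
  set d := -(q ^ (-lam - α₁ - l₁ + h₂) * t₂ / t₁) with hd
  set y := q ^ (-lam - α₁ + h₁ + 1/2) * t₁ / x with hy
  have sq_sqrt : q ^ (1/2 : ℝ) * q ^ (1/2 : ℝ) = q := by rw [← Real.rpow_add hq]; norm_num
  have coeff_mul_q : q ^ (h₁ + h₂ - l₁ - 2 * lam + 1/2) * t₂ * (q ^ (l₁ - 1/2) * t₁ - x) * q ^ (-α₁)
      = q ^ α₁ * x ^ 2 * (d * y * (1 - b * y / q)) := by
    simp only [hy, hb, hd, Real.rpow_add hq, Real.rpow_sub hq, Real.rpow_neg hq.le, two_mul]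
    field_simp
    linear_combination -(t₂ * q ^ l₁ * t₁) * sq_sqrt
  have coeff_div_q : (x - q ^ (h₁ + 1/2) * t₁) * (x - q ^ (h₂ + 1/2) * t₂)
      = x ^ 2 * ((1 - a * y) * (1 + a * b * d * y)) := by
    simp only [hy, ha, hb, hd, Real.rpow_add hq, Real.rpow_sub hq, Real.rpow_neg hq.le]
    field_simp
    ring
  have coeff_id : q ^ α₁ * x ^ 2
        - q ^ (h₁ + h₂ - lam + 1/2) * (q ^ (-h₂) * t₁ + q ^ (-h₁) * t₂ + q ^ (-l₁) * t₂) * x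
        + q ^ (h₁ + h₂ - lam) * (q + 1) * t₁ * t₂
      = q ^ α₁ * x ^ 2 * (1 - (1 - b * d - a * d) * y - a * b * d * (1 + q) / q * y ^ 2) := by
    simp only [hy, ha, hb, hd, Real.rpow_add hq, Real.rpow_sub hq, Real.rpow_neg hq.le]
    field_simp
    linear_combination -(q ^ h₁ * q ^ h₂ * q ^ l₁ * t₁ * t₂ * (1 + q)) * sq_sqrt
  rw [coeff_id, coeff_div_q]
  linear_combination x ^ (-α₁) * f (y / q) * coeff_mul_q + q ^ α₁ * x ^ 2 * x ^ (-α₁) * hf y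

theorem stmt2 (q h₁ h₂ l₁ α₁ lam t₁ t₂ : ℝ) (N : ℕ)
    (hq : 0 < q) (hq1 : q ≠ 1) (ht₁ : t₁ ≠ 0) (ht₂ : t₂ ≠ 0)
    (hN : 0 < N) (hNlam : lam + α₁ = -(N : ℝ)) :
    confEq12 q h₁ h₂ l₁ α₁ lam t₁ t₂ (fun x =>
      x ^ (-α₁) * ∑ n ∈ Finset.range (N + 1),
        (q ^ (-lam - α₁ + h₁ + 1/2) * t₁ / x) ^ n * qPoch q (q ^ (lam + α₁)) n *
          ∑ l ∈ Finset.range (n + 1),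
            qPoch q (q ^ (lam + α₁ - h₁ + l₁)) l / (qPoch q q (n - l) * qPoch q q l) *
              q ^ (-(l : ℝ) * (2 * (n : ℝ) - (l : ℝ) - 1) / 2) *
              (-(q ^ (-lam - α₁ - l₁ + h₂) * t₂ / t₁)) ^ l) := by
  have hq_abs : |q| ≠ 1 := by rwa [abs_of_pos hq]
  have terminates : q ^ (lam + α₁) * q ^ N = 1 := by
    rw [hNlam, Real.rpow_neg hq.le, Real.rpow_natCast, inv_mul_cancel₀ (pow_ne_zero N hq.ne')]
  simpa only [confPoly_eq_sum hq] using
    confEq12_of_normalizedConfEq12 hq ht₁ (normalizedConfEq12_confPoly hq.ne' hq_abs terminates _ _)
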